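/- Let $U$ be uniform on $(-\pi/2, \pi/2)$ and $W$ an independent exponential random variable with mean 1. For $\alpha \in (0,2]$, $\alpha \neq 1$, and $\beta = 0$, the random variable $X = \frac{\sin(\alpha U)}{(\cos U)^{1/\alpha}} \left[\frac{\cos(U - \alpha U)}{W}\right]^{(1-\alpha)/\alpha}$ has characteristic function $E[e^{i\theta X}] = \exp\{-|\theta|^{\alpha}\}$, i.e., $X \sim S_{\alpha}(1, 0, 0)$. -/

import Mathlib

open MeasureTheory ProbabilityTheory Filter Topology

/-- Characteristic function of a measure on ℝ. -/
noncomputable def cf (ν : Measure ℝ) (θ : ℝ) : ℂ :=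
  ∫ x, Complex.exp (Complex.I * θ * x) ∂ν

/-- The characteristic function of the stable law `S_α(σ, β, μ)` (for `α ≠ 1`). -/
noncomputable def stableCF (α σ β μ : ℝ) (θ : ℝ) : ℂ :=
  Complex.exp (((-(σ ^ α * |θ| ^ α) : ℝ) : ℂ) *
      (1 - Complex.I * (β : ℂ) * ((Real.sign θ : ℝ) : ℂ) *
        ((Real.tan (Real.pi * α / 2) : ℝ) : ℂ)) +
    Complex.I * (μ : ℂ) * (θ : ℂ))

/-!
Write `φ t = exp (-|t| ^ α)`. A symmetric law `μ` has characteristic function `φ` as soon as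
`μ [-x, x] = (2 / π) ∫₀^∞ φ t sin (x t) / t dt` for `x > 0` (Gil-Pelaez). This integral is the
imaginary part of `∫ exp (-t ^ α + i x t) dt / t`, whose contour can be moved to the curve on which
the exponent is real. Parametrized by the angle `u ∈ (0, π/2)` of `t`, the imaginary part of
`dt / t` is `du`, so the integral becomes that of `exp (-V u)`, where `V` is Zolotarev's function.
On the other hand, for every `x > 0`, the variable of the theorem is `x (W / V U) ^ ((α - 1) / α)`
when `U > 0`, so `exp (-V u)` is the conditional probability of `|X| ≤ x` given `|U| = u` if
`α < 1`, and that of `|X| ≥ x` if `α > 1`. In the latter case the curve is run through backwards and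
ends at `t = 0`, where the pole of `dt / t` contributes a quarter turn: the contour integral is
`π / 2` minus the original one. The exponents `1` and `2` follow by continuity in `α`.
-/

namespace ChambersMallowsStuck

open Set
open scoped Real FourierTransform

section GilPelaez

theorem eq_withDensity_of_hasDerivAt_cdf {μ : Measure ℝ} [IsProbabilityMeasure μ] {f : ℝ → ℝ}
    (hf : ∀ x, HasDerivAt (cdf μ) (f x) x) :
    μ = volume.withDensity fun x => ENNReal.ofReal (f x) := by
  have hf0 : ∀ x, 0 ≤ f x := fun x => (hf x).nonneg_of_monotone (monotone_cdf μ)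
  have hcont : Continuous (cdf μ) := continuous_iff_continuousAt.2 fun x => (hf x).continuousAt
  refine Measure.ext_of_Ioc _ _ fun a b hab => ?_
  have hint : IntegrableOn f (Ioc a b) :=
    intervalIntegral.integrableOn_deriv_of_nonneg hcont.continuousOn (fun x _ => hf x)
      fun x _ => hf0 x
  have hftc : ∫ x in Ioc a b, f x = cdf μ b - cdf μ a := by
    rw [← intervalIntegral.integral_of_le hab.le]
    exact intervalIntegral.integral_eq_sub_of_hasDerivAt (fun x _ => hf x)
      ((intervalIntegrable_iff_integrableOn_Ioc_of_le hab.le).2 hint)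
  rw [withDensity_apply _ measurableSet_Ioc,
    ← ofReal_integral_eq_lintegral_ofReal hint (ae_of_all _ hf0), hftc,
    ← StieltjesFunction.measure_Ioc, measure_cdf]

theorem measureReal_Iic_of_map_neg_eq {μ : Measure ℝ} [IsProbabilityMeasure μ]
    (hμ : μ.map Neg.neg = μ) {x : ℝ} (hx : 0 ≤ x) :
    μ.real (Iic x) = 1 / 2 + μ.real (Icc (-x) x) / 2 := by
  have htails : μ.real (Iio (-x)) = μ.real (Ioi x) := by
    conv_rhs => rw [← hμ, map_measureReal_apply measurable_neg measurableSet_Ioi]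
    simp
  have hsplit : μ.real (Iic x) = μ.real (Iio (-x)) + μ.real (Icc (-x) x) := by
    rw [← measureReal_union _ measurableSet_Icc, Iio_union_Icc_eq_Iic (by linarith)]
    exact disjoint_left.2 fun z hz hz' => hz'.1.not_gt hz
  have hcompl : μ.real (Ioi x) = 1 - μ.real (Iic x) := by
    rw [← compl_Iic, probReal_compl_eq_one_sub measurableSet_Iic]
  linarith

theorem cdf_neg_of_map_neg_eq {μ : Measure ℝ} [IsProbabilityMeasure μ]
    (hμ : μ.map Neg.neg = μ) (x : ℝ) :
    cdf μ (-x) = 1 - Function.leftLim (cdf μ) x := by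
  have hIio : μ.real (Iio x) = Function.leftLim (cdf μ) x := by
    have h := (cdf μ).measure_Iio (tendsto_cdf_atBot μ) x
    rw [measure_cdf, sub_zero] at h
    rw [measureReal_def, h, ENNReal.toReal_ofReal]
    exact (cdf_nonneg μ (x - 1)).trans ((monotone_cdf μ).le_leftLim (sub_one_lt x))
  have hneg : μ.real (Iic (-x)) = μ.real (Ici x) := by
    conv_rhs => rw [← hμ, map_measureReal_apply measurable_neg measurableSet_Ici]
    simp
  rw [cdf_eq_real, hneg, ← compl_Iio, probReal_compl_eq_one_sub measurableSet_Iio, hIio]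

theorem cdf_eq_of_map_neg_eq {μ : Measure ℝ} [IsProbabilityMeasure μ] (hμ : μ.map Neg.neg = μ)
    {F : ℝ → ℝ} (hF : Continuous F) (hodd : ∀ x, F (-x) = -F x)
    (hIcc : ∀ x > 0, μ.real (Icc (-x) x) = 2 * F x) (x : ℝ) :
    cdf μ x = 1 / 2 + F x := by
  have hpos : ∀ y > 0, cdf μ y = 1 / 2 + F y := fun y hy => by
    rw [cdf_eq_real, measureReal_Iic_of_map_neg_eq hμ hy.le, hIcc y hy]
    ring
  rcases lt_trichotomy x 0 with hx | rfl | hx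
  · have hlim : Tendsto (cdf μ) (𝓝[<] (-x)) (𝓝 (1 / 2 + F (-x))) :=
      (((hF.const_add _).tendsto (-x)).mono_left nhdsWithin_le_nhds).congr' <| by
        filter_upwards [Ioo_mem_nhdsLT (neg_pos.2 hx)] with z hz using (hpos z hz.1).symm
    have hcdf := cdf_neg_of_map_neg_eq hμ (-x)
    rw [neg_neg, leftLim_eq_of_tendsto hlim, hodd] at hcdf
    linarith
  · refine tendsto_nhds_unique
      (((cdf μ).right_continuous 0).mono_left (nhdsWithin_mono 0 Ioi_subset_Ici_self)) ?_
    exact (((hF.const_add _).tendsto 0).mono_left nhdsWithin_le_nhds).congr' <| by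
      filter_upwards [self_mem_nhdsWithin] with z hz using (hpos z hz).symm
  · exact hpos x hx

/-- The integral `∫₀^∞ φ(t) sin(xt)/t dt`, which Gil-Pelaez's inversion formula identifies with
`π (F x - 1/2)` when `φ` is the characteristic function of a symmetric law with cdf `F`. -/
noncomputable def sineIntegral (φ : ℝ → ℝ) (x : ℝ) : ℝ :=
  ∫ t in Ioi 0, φ t * (Real.sin (x * t) / t)

theorem sineIntegral_neg (φ : ℝ → ℝ) (x : ℝ) : sineIntegral φ (-x) = -sineIntegral φ x := by
  simp [sineIntegral, neg_div, integral_neg]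

theorem abs_sin_mul_div_le (x t : ℝ) : |Real.sin (x * t) / t| ≤ |x| := by
  rcases eq_or_ne t 0 with rfl | ht
  · simp
  · rw [abs_div, div_le_iff₀ (abs_pos.2 ht), ← abs_mul]
    exact Real.abs_sin_le_abs

theorem hasDerivAt_sineIntegral {φ : ℝ → ℝ} (hφ : IntegrableOn φ (Ioi 0)) (x : ℝ) :
    HasDerivAt (sineIntegral φ) (∫ t in Ioi 0, φ t * Real.cos (x * t)) x := by
  have hmeas (x : ℝ) :
      AEStronglyMeasurable (fun t => φ t * (Real.sin (x * t) / t)) (volume.restrict (Ioi 0)) :=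
    hφ.aestronglyMeasurable.mul (by fun_prop : Measurable _).aestronglyMeasurable
  refine (hasDerivAt_integral_of_dominated_loc_of_deriv_le univ_mem
    (F' := fun x t => φ t * Real.cos (x * t)) (Eventually.of_forall hmeas) ?_
    (hφ.aestronglyMeasurable.mul (by fun_prop : Measurable _).aestronglyMeasurable)
    ?_ hφ.norm ?_).2
  · refine (hφ.norm.mul_const |x|).mono' (hmeas x) (ae_of_all _ fun t => ?_)
    rw [norm_mul]
    exact mul_le_mul_of_nonneg_left (abs_sin_mul_div_le x t) (norm_nonneg _)
  · refine ae_of_all _ fun t x _ => ?_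
    rw [norm_mul]
    exact mul_le_of_le_one_right (norm_nonneg _) (Real.abs_cos_le_one _)
  · filter_upwards [ae_restrict_mem measurableSet_Ioi] with t (ht : 0 < t) x _
    have h : HasDerivAt (fun x => Real.sin (x * t) / t) (Real.cos (x * t) * t / t) x := by
      simpa using ((hasDerivAt_mul_const t).sin.div_const t)
    rw [mul_div_cancel_right₀ _ ht.ne'] at h
    exact h.const_mul (φ t)

theorem fourier_ofReal_of_even {φ : ℝ → ℝ} (hφ : Integrable φ) (heven : ∀ t, φ (-t) = φ t)
    (ξ : ℝ) :
    𝓕 (fun t => (φ t : ℂ)) ξ = (2 * ∫ t in Ioi 0, φ t * Real.cos (2 * π * ξ * t) : ℝ) := by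
  set e : ℝ → ℂ := fun t => Complex.exp ((-2 * π * t * ξ : ℝ) * Complex.I) • (φ t : ℂ)
  have he : Integrable e :=
    hφ.ofReal.bdd_mul (c := 1) (by fun_prop) (ae_of_all _ fun t => by
      rw [Complex.norm_exp_ofReal_mul_I])
  have hsymm (t : ℝ) : e t + e (-t) = (2 * (φ t * Real.cos (2 * π * ξ * t)) : ℝ) := by
    simp only [e, heven, smul_eq_mul]
    push_cast
    rw [Complex.cos]
    ring_nf
  have hcos : ∫ t, φ t * Real.cos (2 * π * ξ * t) =
      2 * ∫ t in Ioi 0, φ t * Real.cos (2 * π * ξ * t) := by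
    rw [← integral_comp_abs]
    refine integral_congr_ae (ae_of_all _ fun t => ?_)
    rcases abs_choice t with h | h <;> simp [h, heven]
  have hsum : ∫ t, e t + e (-t) = (2 * ∫ t, φ t * Real.cos (2 * π * ξ * t) : ℝ) := by
    rw [integral_congr_ae (ae_of_all _ hsymm), integral_complex_ofReal, integral_const_mul]
  rw [integral_add he he.comp_neg, integral_neg_eq_self, ← two_mul, Complex.ofReal_mul,
    Complex.ofReal_ofNat] at hsum
  rw [Real.fourier_real_eq_integral_exp_smul, ← hcos]
  exact mul_left_cancel₀ two_ne_zero hsum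

theorem charFun_withDensity_of_fourier_eq {φ : ℝ → ℂ} (hφ : Continuous φ) (hφi : Integrable φ)
    {f : ℝ → ℝ} (hf : Measurable f) (hf0 : ∀ x, 0 ≤ f x) (hfi : Integrable f)
    (h : ∀ ξ, 𝓕 φ ξ = (2 * π * f (2 * π * ξ) : ℝ)) (θ : ℝ) :
    charFun (volume.withDensity fun x => ENNReal.ofReal (f x)) θ = φ θ := by
  have hFi : Integrable (𝓕 φ) := by
    rw [funext h]
    exact ((hfi.comp_mul_left' (by positivity)).const_mul _).ofReal
  have hscale := Measure.integral_comp_mul_left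
    (fun x : ℝ => f x • Complex.exp (θ * x * Complex.I)) (2 * π)
  rw [← congrFun (hφ.fourierInv_fourier_eq hφi hFi) θ, Real.fourierInv_eq', charFun_apply_real,
    integral_withDensity_eq_integral_toReal_smul hf.ennreal_ofReal (by simp)]
  simp_rw [ENNReal.toReal_ofReal (hf0 _)]
  rw [abs_of_pos (by positivity), eq_inv_smul_iff₀ (by positivity), ← integral_smul] at hscale
  rw [← hscale]
  refine integral_congr_ae (ae_of_all _ fun v => ?_)
  simp only [h, Complex.real_smul, smul_eq_mul, RCLike.inner_apply, conj_trivial]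
  push_cast
  ring_nf

theorem charFun_eq_of_measureReal_Icc {μ : Measure ℝ} [IsProbabilityMeasure μ]
    (hμ : μ.map Neg.neg = μ) {φ : ℝ → ℝ} (hφ : Continuous φ) (hφi : Integrable φ)
    (heven : ∀ t, φ (-t) = φ t)
    (hIcc : ∀ x > 0, μ.real (Icc (-x) x) = 2 / π * sineIntegral φ x) (θ : ℝ) :
    charFun μ θ = φ θ := by
  set f : ℝ → ℝ := fun x => π⁻¹ * ∫ t in Ioi 0, φ t * Real.cos (x * t)
  have hderiv : ∀ x, HasDerivAt (sineIntegral φ) (∫ t in Ioi 0, φ t * Real.cos (x * t)) x :=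
    hasDerivAt_sineIntegral hφi.integrableOn
  have hcdf : ∀ x, cdf μ x = 1 / 2 + π⁻¹ * sineIntegral φ x := by
    refine cdf_eq_of_map_neg_eq hμ
      (continuous_iff_continuousAt.2 fun x => ((hderiv x).const_mul _).continuousAt)
      (fun x => by rw [sineIntegral_neg, mul_neg]) fun x hx => ?_
    rw [hIcc x hx]
    ring
  have hf : ∀ x, HasDerivAt (cdf μ) (f x) x := by
    rw [funext hcdf]
    exact fun x => ((hderiv x).const_mul π⁻¹).const_add _
  have hf0 : ∀ x, 0 ≤ f x := fun x => (hf x).nonneg_of_monotone (monotone_cdf μ)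
  have hfm : Measurable f := by
    rw [← funext fun x => (hf x).deriv]
    exact measurable_deriv _
  have hdens := eq_withDensity_of_hasDerivAt_cdf hf
  have hfi : Integrable f := by
    refine ⟨hfm.aestronglyMeasurable, ?_⟩
    rw [hasFiniteIntegral_iff_ofReal (ae_of_all _ hf0), ← setLIntegral_univ,
      ← withDensity_apply _ MeasurableSet.univ, ← hdens]
    exact measure_lt_top _ _
  have hfourier (ξ : ℝ) : 𝓕 (fun t => (φ t : ℂ)) ξ = (2 * π * f (2 * π * ξ) : ℝ) := by
    simp only [fourier_ofReal_of_even hφi heven, f, mul_assoc, mul_inv_cancel_left₀ Real.pi_ne_zero]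
  rw [hdens]
  exact charFun_withDensity_of_fourier_eq (Complex.continuous_ofReal.comp hφ) hφi.ofReal
    hfm hf0 hfi hfourier θ

end GilPelaez

section LogarithmicCoordinate

theorem integrableOn_mul_sin_div {φ : ℝ → ℝ} (hφ : IntegrableOn φ (Ioi 0)) (x : ℝ) :
    IntegrableOn (fun t => φ t * (Real.sin (x * t) / t)) (Ioi 0) :=
  Integrable.mul_bdd (c := |x|) hφ (by fun_prop : Measurable _).aestronglyMeasurable
    (ae_of_all _ fun t => abs_sin_mul_div_le x t)

theorem integrable_comp_exp_iff {E : Type*} [NormedAddCommGroup E] [NormedSpace ℝ E] {f : ℝ → E} :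
    Integrable (fun y => Real.exp y • f (Real.exp y)) ↔ IntegrableOn f (Ioi 0) := by
  have h := integrableOn_image_iff_integrableOn_abs_deriv_smul MeasurableSet.univ
    (fun y _ => (Real.hasDerivAt_exp y).hasDerivWithinAt) Real.exp_injective.injOn f
  simpa only [image_univ, Real.range_exp, integrableOn_univ, Real.abs_exp]
    using h.symm

theorem integral_comp_exp {E : Type*} [NormedAddCommGroup E] [NormedSpace ℝ E] (f : ℝ → E) :
    ∫ y, Real.exp y • f (Real.exp y) = ∫ t in Ioi 0, f t := by
  have h := integral_image_eq_integral_abs_deriv_smul MeasurableSet.univ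
    (fun y _ => (Real.hasDerivAt_exp y).hasDerivWithinAt) Real.exp_injective.injOn f
  simpa only [image_univ, Real.range_exp, setIntegral_univ, Real.abs_exp]
    using h.symm

theorem exp_mul_mul_sin_div_exp (φ : ℝ → ℝ) (x y : ℝ) :
    Real.exp y * (φ (Real.exp y) * (Real.sin (x * Real.exp y) / Real.exp y)) =
      φ (Real.exp y) * Real.sin (x * Real.exp y) := by
  field_simp

theorem integrable_comp_exp_mul_sin {φ : ℝ → ℝ} (hφ : IntegrableOn φ (Ioi 0)) (x : ℝ) :
    Integrable fun y => φ (Real.exp y) * Real.sin (x * Real.exp y) := by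
  simpa only [smul_eq_mul, exp_mul_mul_sin_div_exp] using
    integrable_comp_exp_iff.2 (integrableOn_mul_sin_div hφ x)

theorem integral_comp_exp_mul_sin (φ : ℝ → ℝ) (x : ℝ) :
    ∫ y, φ (Real.exp y) * Real.sin (x * Real.exp y) = sineIntegral φ x := by
  simpa only [smul_eq_mul, exp_mul_mul_sin_div_exp, sineIntegral] using
    integral_comp_exp fun t => φ t * (Real.sin (x * t) / t)

end LogarithmicCoordinate

section StableCharFun

/-- The characteristic function `exp (-|t| ^ α)` of the standard symmetric `α`-stable law. -/
noncomputable def stableExp (α t : ℝ) : ℝ := Real.exp (-|t| ^ α)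

theorem stableExp_neg (α t : ℝ) : stableExp α (-t) = stableExp α t := by
  simp [stableExp]

theorem stableExp_exp (α y : ℝ) : stableExp α (Real.exp y) = Real.exp (-Real.exp (α * y)) := by
  rw [stableExp, Real.abs_exp, ← Real.exp_mul, mul_comm]

theorem continuous_stableExp {α : ℝ} (hα : 0 ≤ α) : Continuous (stableExp α) :=
  Real.continuous_exp.comp ((Real.continuous_rpow_const hα).comp continuous_abs).neg

theorem integrable_stableExp {α : ℝ} (hα : 0 < α) : Integrable (stableExp α) := by
  have hIoi := integrableOn_rpow_mul_exp_neg_rpow (s := 0) (by norm_num) hα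
  exact (integrable_fun_norm_addHaar volume (f := fun r => Real.exp (-r ^ α))).2
    (by simpa using hIoi)

end StableCharFun

section LogIntegrand

/-- The integrand `exp (-t ^ α + i x t) dt / t` in the logarithmic coordinate `t = exp z`, in which
it is entire. -/
noncomputable def logIntegrand (α x : ℝ) (z : ℂ) : ℂ :=
  Complex.exp (-Complex.exp (α * z) + Complex.I * x * Complex.exp z)

theorem differentiable_logIntegrand (α x : ℝ) : Differentiable ℂ (logIntegrand α x) := by
  unfold logIntegrand
  fun_prop

@[fun_prop]
theorem continuous_logIntegrand (α x : ℝ) : Continuous (logIntegrand α x) :=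
  (differentiable_logIntegrand α x).continuous

theorem logIntegrand_add_mul_I (α x s u : ℝ) :
    logIntegrand α x (s + u * Complex.I) = Complex.exp
      ⟨-(Real.exp (α * s) * Real.cos (α * u)) - x * Real.exp s * Real.sin u,
        x * Real.exp s * Real.cos u - Real.exp (α * s) * Real.sin (α * u)⟩ := by
  have hpolar (r v : ℝ) : Complex.exp (r + v * Complex.I) =
      Real.exp r * (Real.cos v + Real.sin v * Complex.I) := by
    rw [Complex.exp_add, Complex.exp_mul_I]
    push_cast
    rfl
  have hscaled := hpolar (α * s) (α * u)
  push_cast at hscaled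
  rw [logIntegrand, hpolar, show (α * (s + u * Complex.I) : ℂ) = α * s + α * u * Complex.I by ring,
    hscaled, Complex.mk_eq_add_mul_I]
  congr 1
  push_cast
  linear_combination (x * Complex.exp s * Complex.sin u) * Complex.I_sq

theorem norm_logIntegrand (α x s u : ℝ) : ‖logIntegrand α x (s + u * Complex.I)‖ =
    Real.exp (-(Real.exp (α * s) * Real.cos (α * u)) - x * Real.exp s * Real.sin u) := by
  rw [logIntegrand_add_mul_I, Complex.norm_exp]

theorem logIntegrand_ofReal_im (α x y : ℝ) :
    (logIntegrand α x y).im = stableExp α (Real.exp y) * Real.sin (x * Real.exp y) := by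
  have h := logIntegrand_add_mul_I α x y 0
  simp only [Complex.ofReal_zero, zero_mul, add_zero, mul_zero, Real.cos_zero, Real.sin_zero,
    mul_one, sub_zero] at h
  rw [h, Complex.exp_im, stableExp_exp]

theorem integrable_logIntegrand_ofReal_im {α : ℝ} (hα : 0 < α) (x : ℝ) :
    Integrable fun y : ℝ => (logIntegrand α x y).im := by
  simpa only [logIntegrand_ofReal_im] using
    integrable_comp_exp_mul_sin (integrable_stableExp hα).integrableOn x

theorem integral_logIntegrand_ofReal_im (α x : ℝ) :
    ∫ y : ℝ, (logIntegrand α x y).im = sineIntegral (stableExp α) x := by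
  simpa only [logIntegrand_ofReal_im] using integral_comp_exp_mul_sin (stableExp α) x

theorem norm_logIntegrand_sub_one_le {α x s : ℝ} (hs : Real.exp (α * s) + |x| * Real.exp s ≤ 1)
    (u : ℝ) :
    ‖logIntegrand α x (s + u * Complex.I) - 1‖ ≤
      2 * (Real.exp (α * s) + |x| * Real.exp s) := by
  have hexponent : ‖-Complex.exp (α * (s + u * Complex.I)) +
      Complex.I * x * Complex.exp (s + u * Complex.I)‖ ≤
        Real.exp (α * s) + |x| * Real.exp s := by
    refine (norm_add_le _ _).trans ?_
    rw [norm_neg, norm_mul, norm_mul, Complex.norm_exp, Complex.norm_exp]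
    simp
  exact (Complex.norm_exp_sub_one_le (hexponent.trans hs)).trans (by gcongr)

theorem norm_logIntegrand_le {α x s u c : ℝ} (hα : 0 ≤ α) (hx : 0 ≤ x) (hu : 0 ≤ u) (huc : u ≤ c)
    (hc : c ≤ π) (hαc : α * c ≤ π) :
    ‖logIntegrand α x (s + u * Complex.I)‖ ≤ Real.exp (-(Real.exp (α * s) * Real.cos (α * c))) := by
  have hcos : Real.cos (α * c) ≤ Real.cos (α * u) :=
    Real.cos_le_cos_of_nonneg_of_le_pi (by positivity) hαc (by gcongr)
  have hsin : 0 ≤ x * Real.exp s * Real.sin u :=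
    mul_nonneg (by positivity) (Real.sin_nonneg_of_nonneg_of_le_pi hu (huc.trans hc))
  have hmul := mul_le_mul_of_nonneg_left hcos (Real.exp_pos (α * s)).le
  rw [norm_logIntegrand]
  gcongr
  linarith

end LogIntegrand

section WedgeIntegral

theorem hasDerivAt_wedgeIntegral {E : Type*} [NormedAddCommGroup E] [NormedSpace ℂ E]
    [CompleteSpace E] {f : ℂ → E} (hf : Differentiable ℂ f) (z : ℂ) :
    HasDerivAt (fun w => Complex.wedgeIntegral 0 w f) (f z) z :=
  Complex.IsConservativeOn.hasDerivAt_wedgeIntegral (r := ‖z‖ + 1) hf.continuous.continuousOn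
    (by simp) hf.differentiableOn.isConservativeOn

theorem im_wedgeIntegral_zero {f : ℂ → ℂ} (hf : Continuous f) (s u : ℝ) :
    (Complex.wedgeIntegral 0 (s + u * Complex.I) f).im =
      (∫ y in 0..s, (f y).im) + ∫ v in 0..u, (f (s + v * Complex.I)).re := by
  have hre := Complex.reCLM.intervalIntegral_comp_comm (μ := volume)
    ((by fun_prop : Continuous fun v : ℝ => f (s + v * Complex.I)).intervalIntegrable 0 u)
  have him := Complex.imCLM.intervalIntegral_comp_comm (μ := volume)
    ((by fun_prop : Continuous fun y : ℝ => f y).intervalIntegrable 0 s)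
  simp only [Complex.reCLM_apply, Complex.imCLM_apply] at hre him
  simp [Complex.wedgeIntegral, hre, him]

theorem tendsto_im_wedgeIntegral_atBot {ι : Type*} {l : Filter ι} [l.IsCountablyGenerated]
    {α : ℝ} (hα : 0 < α) (x : ℝ) {s u : ι → ℝ} {c : ℝ} (hs : Tendsto s l atBot)
    (hu : Tendsto u l (𝓝 c)) :
    Tendsto (fun i => (Complex.wedgeIntegral 0 (s i + u i * Complex.I) (logIntegrand α x)).im) l
      (𝓝 (c - ∫ y : ℝ in Iic 0, (logIntegrand α x y).im)) := by
  have hhorizontal := intervalIntegral_tendsto_integral_Iic 0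
    (integrable_logIntegrand_ofReal_im hα x).integrableOn hs
  set ε : ι → ℝ := fun i => Real.exp (α * s i) + |x| * Real.exp (s i)
  have hε : Tendsto ε l (𝓝 0) := by
    simpa using (Real.tendsto_exp_atBot.comp (hs.const_mul_atBot hα)).add
      ((Real.tendsto_exp_atBot.comp hs).const_mul |x|)
  have hvertical : Tendsto
      (fun i => (∫ v in 0..u i, (logIntegrand α x (s i + v * Complex.I)).re) - u i) l (𝓝 0) := by
    refine squeeze_zero_norm' (a := fun i => 2 * ε i * |u i|) ?_
      (by simpa using (hε.const_mul 2).mul hu.abs)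
    filter_upwards [hε.eventually_le_const one_pos] with i hi
    have hsub : (∫ v in 0..u i, (logIntegrand α x (s i + v * Complex.I)).re) - u i =
        ∫ v in 0..u i, (logIntegrand α x (s i + v * Complex.I) - 1).re := by
      simp only [Complex.sub_re, Complex.one_re]
      rw [intervalIntegral.integral_sub (Continuous.intervalIntegrable (by fun_prop) _ _) (by simp)]
      simp
    have hbound (v : ℝ) : ‖(logIntegrand α x (s i + v * Complex.I) - 1).re‖ ≤ 2 * ε i :=
      (Complex.abs_re_le_norm _).trans (norm_logIntegrand_sub_one_le hi v)
    simpa only [hsub, sub_zero] using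
      intervalIntegral.norm_integral_le_of_norm_le_const (a := 0) (b := u i) fun v _ => hbound v
  convert (hvertical.add hu).sub hhorizontal using 2 with i
  · rw [im_wedgeIntegral_zero (continuous_logIntegrand α x), intervalIntegral.integral_symm]
    ring
  · ring

theorem tendsto_im_wedgeIntegral_atTop {ι : Type*} {l : Filter ι} [l.IsCountablyGenerated]
    {α x : ℝ} (hα : 0 < α) (hx : 0 ≤ x) {s u : ι → ℝ} {c : ℝ} (hc : c ∈ Icc 0 π)
    (hαc : α * c < π / 2) (hs : Tendsto s l atTop) (hu : ∀ᶠ i in l, u i ∈ Icc 0 c) :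
    Tendsto (fun i => (Complex.wedgeIntegral 0 (s i + u i * Complex.I) (logIntegrand α x)).im) l
      (𝓝 (∫ y : ℝ in Ioi 0, (logIntegrand α x y).im)) := by
  have hhorizontal := intervalIntegral_tendsto_integral_Ioi 0
    (integrable_logIntegrand_ofReal_im hα x).integrableOn hs
  have hvertical : Tendsto
      (fun i => ∫ v in 0..u i, (logIntegrand α x (s i + v * Complex.I)).re) l (𝓝 0) := by
    have hcos : 0 < Real.cos (α * c) :=
      Real.cos_pos_of_mem_Ioo ⟨by linarith [mul_nonneg hα.le hc.1, Real.pi_pos], hαc⟩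
    have hdecay : Tendsto (fun i => Real.exp (-(Real.exp (α * s i) * Real.cos (α * c)))) l (𝓝 0) :=
      Real.tendsto_exp_neg_atTop_nhds_zero.comp
        ((Real.tendsto_exp_atTop.comp (hs.const_mul_atTop hα)).atTop_mul_const hcos)
    refine squeeze_zero_norm' ?_ (by simpa using hdecay.mul_const c)
    filter_upwards [hu] with i hi
    have hbound : ∀ v ∈ uIoc 0 (u i), ‖(logIntegrand α x (s i + v * Complex.I)).re‖ ≤
        Real.exp (-(Real.exp (α * s i) * Real.cos (α * c))) := fun v hv => by
      rw [uIoc_of_le hi.1] at hv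
      exact (Complex.abs_re_le_norm _).trans
        (norm_logIntegrand_le hα.le hx hv.1.le (hv.2.trans hi.2) hc.2 (by linarith [Real.pi_pos]))
    refine (intervalIntegral.norm_integral_le_of_norm_le_const hbound).trans ?_
    rw [sub_zero, abs_of_nonneg hi.1]
    gcongr
    exact hi.2
  simpa only [im_wedgeIntegral_zero (continuous_logIntegrand α x), add_zero] using
    hhorizontal.add hvertical

end WedgeIntegral

section StationaryCurve

/-- The point `exp (s + u i)` with `s = logRadius α x u` is where the ray of angle `u` meets the
curve on which `-t ^ α + i x t` is real, that is `exp ((α - 1) s) sin (α u) = x cos u`. -/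
noncomputable def logRadius (α x u : ℝ) : ℝ :=
  Real.log (x * Real.cos u / Real.sin (α * u)) / (α - 1)

/-- Zolotarev's exponent `(x cos u / sin (α u)) ^ (α / (α - 1)) cos (u - α u) / cos u`: the real
value of `t ^ α - i x t` at angle `u` on the curve of `logRadius`. -/
noncomputable def zolotarev (α x u : ℝ) : ℝ :=
  Real.exp (α * logRadius α x u) * Real.cos (u - α * u) / Real.cos u

/-- A primitive of `exp (-t ^ α + i x t) / t` along the curve of `logRadius`, of which only the
imaginary part is kept. -/
noncomputable def contourPrimitive (α x u : ℝ) : ℝ :=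
  (Complex.wedgeIntegral 0 (logRadius α x u + u * Complex.I) (logIntegrand α x)).im

theorem cos_sub_mul_pos {α u : ℝ} (hα : α ∈ Icc 0 2) (hu : u ∈ Ioo (-(π / 2)) (π / 2)) :
    0 < Real.cos (u - α * u) := by
  have hα1 : |1 - α| ≤ 1 := abs_le.2 ⟨by linarith [hα.2], by linarith [hα.1]⟩
  have hle : |u - α * u| ≤ |u| := by
    rw [show u - α * u = (1 - α) * u by ring, abs_mul]
    exact mul_le_of_le_one_left (abs_nonneg u) hα1
  exact Real.cos_pos_of_mem_Ioo (abs_lt.1 (hle.trans_lt (abs_lt.2 hu)))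

theorem cos_pos_of_mem_Ioo_zero {u : ℝ} (hu : u ∈ Ioo 0 (π / 2)) : 0 < Real.cos u :=
  Real.cos_pos_of_mem_Ioo ⟨by linarith [hu.1, Real.pi_pos], hu.2⟩

theorem tendsto_sin_mul_nhdsGT_zero {α : ℝ} (hα : 0 < α) :
    Tendsto (fun u => Real.sin (α * u)) (𝓝[>] 0) (𝓝[>] 0) := by
  refine tendsto_nhdsWithin_iff.2 ⟨?_, ?_⟩
  · exact ((by fun_prop : Continuous fun u => Real.sin (α * u)).tendsto' 0 0
      (by simp)).mono_left nhdsWithin_le_nhds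
  · filter_upwards [Ioo_mem_nhdsGT (div_pos Real.pi_pos hα)] with u hu
    exact Real.sin_pos_of_pos_of_lt_pi (mul_pos hα hu.1) ((lt_div_iff₀' hα).1 hu.2)

theorem tendsto_log_ratio_nhdsGT_zero {α x : ℝ} (hα : 0 < α) (hx : 0 < x) :
    Tendsto (fun u => Real.log (x * Real.cos u / Real.sin (α * u))) (𝓝[>] 0) atTop := by
  have hcos : Tendsto (fun u => x * Real.cos u) (𝓝[>] 0) (𝓝 x) :=
    ((by fun_prop : Continuous fun u => x * Real.cos u).tendsto' 0 x (by simp)).mono_left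
      nhdsWithin_le_nhds
  exact Real.tendsto_log_atTop.comp <| hcos.pos_mul_atTop hx <|
    tendsto_inv_nhdsGT_zero.comp (tendsto_sin_mul_nhdsGT_zero hα)

section

variable {α x : ℝ} (hα : α ∈ Ioo 0 2)
include hα

theorem sin_mul_pos {u : ℝ} (hu : u ∈ Ioc 0 (π / 2)) : 0 < Real.sin (α * u) :=
  Real.sin_pos_of_pos_of_lt_pi (mul_pos hα.1 hu.1) <| by
    nlinarith [mul_lt_mul_of_pos_right hα.2 hu.1, hu.2]

theorem tendsto_log_ratio_nhdsLT_pi_div_two (hx : 0 < x) :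
    Tendsto (fun u => Real.log (x * Real.cos u / Real.sin (α * u))) (𝓝[<] (π / 2)) atBot := by
  refine Real.tendsto_log_nhdsGT_zero.comp (tendsto_nhdsWithin_iff.2 ⟨?_, ?_⟩)
  · have hsin := sin_mul_pos hα (right_mem_Ioc.2 Real.pi_div_two_pos)
    have hcont : ContinuousAt (fun u => x * Real.cos u / Real.sin (α * u)) (π / 2) :=
      ContinuousAt.div (by fun_prop) (by fun_prop) hsin.ne'
    simpa [ContinuousAt] using hcont.tendsto.mono_left (nhdsWithin_le_nhds (s := Iio (π / 2)))
  · filter_upwards [Ioo_mem_nhdsLT Real.pi_div_two_pos] with u hu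
    exact div_pos (mul_pos hx (cos_pos_of_mem_Ioo_zero hu))
      (sin_mul_pos hα (Ioo_subset_Ioc_self hu))

theorem zolotarev_pos {u : ℝ} (hu : u ∈ Ioo 0 (π / 2)) : 0 < zolotarev α x u := by
  have hcos := cos_pos_of_mem_Ioo_zero hu
  have hcos_sub := cos_sub_mul_pos (Ioo_subset_Icc_self hα)
    (Ioo_subset_Ioo_left (by linarith [Real.pi_pos]) hu)
  unfold zolotarev
  positivity

variable (hx : 0 < x)
include hx

theorem differentiableAt_logRadius {u : ℝ} (hu : u ∈ Ioo 0 (π / 2)) :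
    DifferentiableAt ℝ (logRadius α x) u := by
  have hcos := cos_pos_of_mem_Ioo_zero hu
  have hsin := sin_mul_pos hα (Ioo_subset_Ioc_self hu)
  unfold logRadius
  refine DifferentiableAt.div_const (DifferentiableAt.log ?_ (by positivity)) _
  exact DifferentiableAt.div (by fun_prop) (by fun_prop) hsin.ne'

theorem continuousOn_zolotarev : ContinuousOn (zolotarev α x) (Ioo 0 (π / 2)) := fun u hu => by
  have hcont := (differentiableAt_logRadius hα hx hu).continuousAt
  have hexp : ContinuousAt (fun v => Real.exp (α * logRadius α x v)) u := by fun_prop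
  exact ((hexp.mul (by fun_prop)).div (by fun_prop)
    (cos_pos_of_mem_Ioo_zero hu).ne').continuousWithinAt

theorem integrableOn_exp_neg_zolotarev :
    IntegrableOn (fun u => Real.exp (-zolotarev α x u)) (Ioo 0 (π / 2)) := by
  refine (integrable_const (1 : ℝ)).mono'
    ((continuousOn_zolotarev hα hx).neg.rexp.aestronglyMeasurable measurableSet_Ioo) ?_
  filter_upwards [ae_restrict_mem measurableSet_Ioo] with u hu
  rw [Real.norm_eq_abs, Real.abs_exp, Real.exp_le_one_iff]
  exact neg_nonpos.2 (zolotarev_pos hα hu).le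

variable (hα1 : α ≠ 1)
include hα1

theorem exp_logRadius_mul_sin {u : ℝ} (hu : u ∈ Ioo 0 (π / 2)) :
    Real.exp (α * logRadius α x u) * Real.sin (α * u) =
      x * Real.exp (logRadius α x u) * Real.cos u := by
  have hcos := cos_pos_of_mem_Ioo_zero hu
  have hsin := sin_mul_pos hα (Ioo_subset_Ioc_self hu)
  have hlog : α * logRadius α x u =
      Real.log (x * Real.cos u / Real.sin (α * u)) + logRadius α x u := by
    have := sub_ne_zero.2 hα1
    unfold logRadius
    field_simp
    ring
  rw [hlog, Real.exp_add, Real.exp_log (by positivity)]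
  field_simp

theorem logIntegrand_logRadius {u : ℝ} (hu : u ∈ Ioo 0 (π / 2)) :
    logIntegrand α x (logRadius α x u + u * Complex.I) = (Real.exp (-zolotarev α x u) : ℝ) := by
  have hstationary := exp_logRadius_mul_sin hα hx hα1 hu
  have hre : -(Real.exp (α * logRadius α x u) * Real.cos (α * u)) -
      x * Real.exp (logRadius α x u) * Real.sin u = -zolotarev α x u := by
    have := (cos_pos_of_mem_Ioo_zero hu).ne'
    rw [zolotarev, Real.cos_sub]
    field_simp
    linear_combination Real.sin u * hstationary
  rw [logIntegrand_add_mul_I, hre, ← hstationary, sub_self, Complex.ofReal_exp]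
  rfl

theorem hasDerivAt_contourPrimitive {u : ℝ} (hu : u ∈ Ioo 0 (π / 2)) :
    HasDerivAt (contourPrimitive α x) (Real.exp (-zolotarev α x u)) u := by
  have hcurve : HasDerivAt (fun v : ℝ => (logRadius α x v + v * Complex.I : ℂ))
      (deriv (logRadius α x) u + Complex.I) u := by
    simpa using (differentiableAt_logRadius hα hx hu).hasDerivAt.ofReal_comp.fun_add
      ((hasDerivAt_id u).ofReal_comp.mul_const Complex.I)
  have hprim := (hasDerivAt_wedgeIntegral (differentiable_logIntegrand α x) _).scomp u hcurve
  rw [logIntegrand_logRadius hα hx hα1 hu] at hprim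
  refine (Complex.imCLM.hasFDerivAt.comp_hasDerivAt u hprim).congr_deriv ?_
  rw [Complex.imCLM_apply, smul_eq_mul, Complex.im_mul_ofReal]
  simp

theorem integral_exp_neg_zolotarev_eq_sub {a b : ℝ}
    (h0 : Tendsto (contourPrimitive α x) (𝓝[>] 0) (𝓝 a))
    (h1 : Tendsto (contourPrimitive α x) (𝓝[<] (π / 2)) (𝓝 b)) :
    ∫ u in Ioo 0 (π / 2), Real.exp (-zolotarev α x u) = b - a := by
  have hint := integrableOn_exp_neg_zolotarev hα hx
  rw [← intervalIntegrable_iff_integrableOn_Ioo_of_le Real.pi_div_two_pos.le] at hint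
  rw [← integral_Ioc_eq_integral_Ioo, ← intervalIntegral.integral_of_le Real.pi_div_two_pos.le]
  exact intervalIntegral.integral_eq_sub_of_hasDerivAt_of_tendsto Real.pi_div_two_pos
    (fun u => hasDerivAt_contourPrimitive hα hx hα1) hint h0 h1

end

theorem integral_exp_neg_zolotarev_of_lt_one {α x : ℝ} (hα : α ∈ Ioo 0 1) (hx : 0 < x) :
    ∫ u in Ioo 0 (π / 2), Real.exp (-zolotarev α x u) = sineIntegral (stableExp α) x := by
  have hα2 : α ∈ Ioo 0 2 := Ioo_subset_Ioo_right one_le_two hα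
  have hs0 : Tendsto (logRadius α x) (𝓝[>] 0) atBot :=
    (tendsto_log_ratio_nhdsGT_zero hα.1 hx).atTop_div_const_of_neg (sub_neg.2 hα.2)
  have hs1 : Tendsto (logRadius α x) (𝓝[<] (π / 2)) atTop :=
    (tendsto_log_ratio_nhdsLT_pi_div_two hα2 hx).atBot_mul_const_of_neg
      (inv_lt_zero.2 (sub_neg.2 hα.2))
  have h0 := tendsto_im_wedgeIntegral_atBot hα.1 x hs0 (tendsto_id.mono_left nhdsWithin_le_nhds)
  have hu : ∀ᶠ u in 𝓝[<] (π / 2), u ∈ Icc 0 (π / 2) := by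
    filter_upwards [Ioo_mem_nhdsLT Real.pi_div_two_pos] with u hu using Ioo_subset_Icc_self hu
  have h1 := tendsto_im_wedgeIntegral_atTop hα.1 hx.le
    ⟨Real.pi_div_two_pos.le, by linarith [Real.pi_pos]⟩
    (mul_lt_of_lt_one_left Real.pi_div_two_pos hα.2) hs1 hu
  have hint := integrable_logIntegrand_ofReal_im hα.1 x
  rw [integral_exp_neg_zolotarev_eq_sub hα2 hx hα.2.ne h0 h1, ← integral_logIntegrand_ofReal_im,
    ← intervalIntegral.integral_Iic_add_Ioi hint.integrableOn hint.integrableOn (b := 0)]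
  ring

theorem integral_exp_neg_zolotarev_of_one_lt {α x : ℝ} (hα : α ∈ Ioo 1 2) (hx : 0 < x) :
    ∫ u in Ioo 0 (π / 2), Real.exp (-zolotarev α x u) =
      π / 2 - sineIntegral (stableExp α) x := by
  have hα2 : α ∈ Ioo 0 2 := Ioo_subset_Ioo_left zero_le_one hα
  have hs0 : Tendsto (logRadius α x) (𝓝[>] 0) atTop :=
    (tendsto_log_ratio_nhdsGT_zero hα2.1 hx).atTop_div_const (sub_pos.2 hα.1)
  have hs1 : Tendsto (logRadius α x) (𝓝[<] (π / 2)) atBot :=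
    (tendsto_log_ratio_nhdsLT_pi_div_two hα2 hx).atBot_div_const (sub_pos.2 hα.1)
  have hu : ∀ᶠ u in 𝓝[>] 0, u ∈ Icc 0 (π / 4) := by
    filter_upwards [Ioo_mem_nhdsGT (by positivity : (0 : ℝ) < π / 4)] with u hu
      using Ioo_subset_Icc_self hu
  have h0 := tendsto_im_wedgeIntegral_atTop hα2.1 hx.le ⟨by positivity, by linarith [Real.pi_pos]⟩
    (by linarith [mul_lt_mul_of_pos_right hα.2 Real.pi_pos]) hs0 hu
  have h1 := tendsto_im_wedgeIntegral_atBot hα2.1 x hs1 (tendsto_id.mono_left nhdsWithin_le_nhds)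
  have hint := integrable_logIntegrand_ofReal_im hα2.1 x
  rw [integral_exp_neg_zolotarev_eq_sub hα2 hx hα.1.ne' h0 h1, ← integral_logIntegrand_ofReal_im,
    ← intervalIntegral.integral_Iic_add_Ioi hint.integrableOn hint.integrableOn (b := 0)]
  ring

end StationaryCurve

section ChambersMallowsStuckMap

/-- The Chambers-Mallows-Stuck map, which turns a uniform angle and an independent exponential time
into a symmetric `α`-stable variable. -/
noncomputable def cmsMap (α : ℝ) (p : ℝ × ℝ) : ℝ :=
  Real.sin (α * p.1) / Real.cos p.1 ^ (1 / α) *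
    (Real.cos (p.1 - α * p.1) / p.2) ^ ((1 - α) / α)

/-- The uniform law on `(-π/2, π/2)`. -/
noncomputable def angleLaw : Measure ℝ :=
  ENNReal.ofReal (1 / π) • volume.restrict (Ioo (-(π / 2)) (π / 2))

/-- The law of `cmsMap α` under the product of the uniform and the standard exponential laws. -/
noncomputable def cmsLaw (α : ℝ) : Measure ℝ :=
  (angleLaw.prod (expMeasure 1)).map (cmsMap α)

instance isProbabilityMeasure_angleLaw : IsProbabilityMeasure angleLaw := by
  refine ⟨?_⟩
  rw [angleLaw, Measure.smul_apply, Measure.restrict_apply_univ, Real.volume_Ioo, smul_eq_mul,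
    ← ENNReal.ofReal_mul (by positivity), sub_neg_eq_add, add_halves,
    one_div_mul_cancel Real.pi_ne_zero, ENNReal.ofReal_one]

instance isProbabilityMeasure_expMeasure_one : IsProbabilityMeasure (expMeasure 1) :=
  isProbabilityMeasure_expMeasure one_pos

@[fun_prop]
theorem measurable_cmsMap (α : ℝ) : Measurable (cmsMap α) := by
  unfold cmsMap
  fun_prop

instance isProbabilityMeasure_cmsLaw (α : ℝ) : IsProbabilityMeasure (cmsLaw α) :=
  Measure.isProbabilityMeasure_map (measurable_cmsMap α).aemeasurable

theorem map_neg_angleLaw : angleLaw.map Neg.neg = angleLaw := by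
  have h := (Measure.measurePreserving_neg (volume : Measure ℝ)).restrict_preimage
    (measurableSet_Ioo (a := -(π / 2)) (b := π / 2))
  rw [neg_preimage, neg_Ioo, neg_neg] at h
  rw [angleLaw, Measure.map_smul, h.map_eq]

theorem cmsMap_neg (α u w : ℝ) : cmsMap α (-u, w) = -cmsMap α (u, w) := by
  simp only [cmsMap, mul_neg, Real.sin_neg, Real.cos_neg]
  rw [neg_sub_neg, ← neg_sub, Real.cos_neg]
  ring

theorem map_neg_cmsLaw (α : ℝ) : (cmsLaw α).map Neg.neg = cmsLaw α := by
  have hflip : MeasurePreserving (Prod.map Neg.neg id)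
      (angleLaw.prod (expMeasure 1)) (angleLaw.prod (expMeasure 1)) :=
    (⟨measurable_neg, map_neg_angleLaw⟩ : MeasurePreserving _ angleLaw angleLaw).prod
      (MeasurePreserving.id _)
  conv_rhs => rw [cmsLaw, ← hflip.map_eq]
  rw [cmsLaw, Measure.map_map measurable_neg (by fun_prop),
    Measure.map_map (by fun_prop) hflip.measurable]
  congr 1
  exact funext fun p => (cmsMap_neg α p.1 p.2).symm

theorem cmsMap_eq_mul_rpow {α x u w : ℝ} (hα : α ∈ Ioo 0 2) (hα1 : α ≠ 1) (hx : 0 < x)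
    (hu : u ∈ Ioo 0 (π / 2)) (hw : 0 < w) :
    cmsMap α (u, w) = x * (w / zolotarev α x u) ^ ((α - 1) / α) := by
  have hcos := cos_pos_of_mem_Ioo_zero hu
  have hsin := sin_mul_pos hα (Ioo_subset_Ioc_self hu)
  have hcos_sub := cos_sub_mul_pos (Ioo_subset_Icc_self hα)
    (Ioo_subset_Ioo_left (by linarith [Real.pi_pos]) hu)
  have hV := zolotarev_pos (x := x) hα hu
  have hcms_pos : 0 < cmsMap α (u, w) := by
    unfold cmsMap
    positivity
  have hlog_radius : logRadius α x u =
      (Real.log x + Real.log (Real.cos u) - Real.log (Real.sin (α * u))) / (α - 1) := by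
    rw [logRadius, Real.log_div (by positivity) hsin.ne', Real.log_mul hx.ne' hcos.ne']
  have hlog_V : Real.log (zolotarev α x u) =
      α * logRadius α x u + Real.log (Real.cos (u - α * u)) - Real.log (Real.cos u) := by
    rw [zolotarev, Real.log_div (by positivity) hcos.ne',
      Real.log_mul (by positivity) hcos_sub.ne', Real.log_exp]
  have hlog_cms : Real.log (cmsMap α (u, w)) =
      Real.log (Real.sin (α * u)) - 1 / α * Real.log (Real.cos u) +
        (1 - α) / α * (Real.log (Real.cos (u - α * u)) - Real.log w) := by
    rw [cmsMap, Real.log_mul (by positivity) (by positivity), Real.log_div hsin.ne' (by positivity),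
      Real.log_rpow hcos, Real.log_rpow (by positivity), Real.log_div hcos_sub.ne' hw.ne']
  refine Real.log_injOn_pos (mem_Ioi.2 hcms_pos) (mem_Ioi.2 (by positivity)) ?_
  rw [Real.log_mul hx.ne' (by positivity), Real.log_rpow (by positivity),
    Real.log_div hw.ne' hV.ne', hlog_cms, hlog_V, hlog_radius]
  have := hα.1.ne'
  have := sub_ne_zero.2 hα1
  field_simp
  ring

theorem cmsMap_mem_Icc_iff {α x u w : ℝ} (hα : α ∈ Ioo 0 2) (hα1 : α ≠ 1) (hx : 0 < x)
    (hu : u ∈ Ioo 0 (π / 2)) (hw : 0 < w) :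
    cmsMap α (u, w) ∈ Icc (-x) x ↔
      zolotarev α x u ≤ w ∧ α ≤ 1 ∨ w ≤ zolotarev α x u ∧ 1 ≤ α := by
  have hV := zolotarev_pos (x := x) hα hu
  have hratio := div_pos hw hV
  have hnonneg : 0 ≤ x * (w / zolotarev α x u) ^ ((α - 1) / α) := by positivity
  rw [mem_Icc, cmsMap_eq_mul_rpow hα hα1 hx hu hw, and_iff_right (by linarith),
    mul_le_iff_le_one_right hx, Real.rpow_le_one_iff_of_pos hratio, one_le_div hV, div_le_one hV,
    div_le_iff₀ hα.1, le_div_iff₀ hα.1, zero_mul, sub_nonpos, sub_nonneg]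

theorem measureReal_expMeasure_Iic {r v : ℝ} (hr : 0 < r) (hv : 0 ≤ v) :
    (expMeasure r).real (Iic v) = 1 - Real.exp (-(r * v)) := by
  have := isProbabilityMeasure_expMeasure hr
  rw [← cdf_eq_real, cdf_expMeasure_eq hr, if_pos hv]

theorem measureReal_expMeasure_Ici {r v : ℝ} (hr : 0 < r) (hv : 0 ≤ v) :
    (expMeasure r).real (Ici v) = Real.exp (-(r * v)) := by
  have := isProbabilityMeasure_expMeasure hr
  have hatom : NullSingletonClass (expMeasure r) :=
    ⟨fun x => withDensity_absolutelyContinuous _ _ (Real.volume_singleton)⟩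
  rw [← compl_Iio, probReal_compl_eq_one_sub measurableSet_Iio, measureReal_congr Iio_ae_eq_Iic,
    measureReal_expMeasure_Iic hr hv, sub_sub_cancel]

theorem ae_pos_expMeasure {r : ℝ} (hr : 0 < r) : ∀ᵐ w ∂expMeasure r, 0 < w := by
  have := isProbabilityMeasure_expMeasure hr
  have h := measureReal_expMeasure_Iic hr le_rfl
  rw [mul_zero, neg_zero, Real.exp_zero, sub_self, measureReal_eq_zero_iff] at h
  simp only [ae_iff, not_lt]
  exact h

theorem measureReal_cmsMap_of_lt_one {α x u : ℝ} (hα : α ∈ Ioo 0 1) (hx : 0 < x)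
    (hu : u ∈ Ioo 0 (π / 2)) :
    (expMeasure 1).real {w | cmsMap α (u, w) ∈ Icc (-x) x} = Real.exp (-zolotarev α x u) := by
  have hα2 : α ∈ Ioo 0 2 := Ioo_subset_Ioo_right one_le_two hα
  rw [← one_mul (zolotarev α x u),
    ← measureReal_expMeasure_Ici one_pos (zolotarev_pos hα2 hu).le]
  refine measureReal_congr ?_
  filter_upwards [ae_pos_expMeasure one_pos] with w hw
  refine propext ((cmsMap_mem_Icc_iff hα2 hα.2.ne hx hu hw).trans ?_)
  simp only [hα.2.le, hα.2.not_ge, and_true, and_false, or_false]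
  rfl

theorem measureReal_cmsMap_of_one_lt {α x u : ℝ} (hα : α ∈ Ioo 1 2) (hx : 0 < x)
    (hu : u ∈ Ioo 0 (π / 2)) :
    (expMeasure 1).real {w | cmsMap α (u, w) ∈ Icc (-x) x} =
      1 - Real.exp (-zolotarev α x u) := by
  have hα2 : α ∈ Ioo 0 2 := Ioo_subset_Ioo_left zero_le_one hα
  rw [← one_mul (zolotarev α x u),
    ← measureReal_expMeasure_Iic one_pos (zolotarev_pos hα2 hu).le]
  refine measureReal_congr ?_
  filter_upwards [ae_pos_expMeasure one_pos] with w hw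
  refine propext ((cmsMap_mem_Icc_iff hα2 hα.1.ne' hx hu hw).trans ?_)
  simp only [hα.1.le, hα.1.not_ge, and_true, and_false, false_or]
  rfl

theorem integral_measureReal_cmsMap {α x : ℝ} (hα : α ∈ Ioo 0 2) (hα1 : α ≠ 1) (hx : 0 < x) :
    ∫ u in Ioo 0 (π / 2), (expMeasure 1).real {w | cmsMap α (u, w) ∈ Icc (-x) x} =
      sineIntegral (stableExp α) x := by
  rcases hα1.lt_or_gt with hlt | hgt
  · rw [← integral_exp_neg_zolotarev_of_lt_one ⟨hα.1, hlt⟩ hx]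
    exact setIntegral_congr_fun measurableSet_Ioo fun u hu =>
      measureReal_cmsMap_of_lt_one ⟨hα.1, hlt⟩ hx hu
  · rw [setIntegral_congr_fun measurableSet_Ioo fun u hu =>
        measureReal_cmsMap_of_one_lt ⟨hgt, hα.2⟩ hx hu,
      integral_sub (by simp) (integrableOn_exp_neg_zolotarev hα hx),
      integral_exp_neg_zolotarev_of_one_lt ⟨hgt, hα.2⟩ hx, setIntegral_const,
      Real.volume_real_Ioo_of_le Real.pi_div_two_pos.le, smul_eq_mul]
    ring

theorem setIntegral_Ioo_neg_of_even {f : ℝ → ℝ} (hf : ∀ u, f (-u) = f u) (a : ℝ) :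
    ∫ u in Ioo (-a) a, f u = 2 * ∫ u in Ioo 0 a, f u := by
  have h := integral_comp_abs (f := (Iio a).indicator f)
  have habs : (fun u => (Iio a).indicator f |u|) = (Ioo (-a) a).indicator f := by
    ext u
    have : f |u| = f u := by rcases abs_choice u with hu | hu <;> rw [hu]; exact hf u
    simp only [indicator, mem_Iio, mem_Ioo, ← abs_lt, this]
  rwa [setIntegral_indicator measurableSet_Iio, Ioi_inter_Iio, habs,
    integral_indicator measurableSet_Ioo] at h

theorem measureReal_prod_eq_integral {E F : Type*} [MeasurableSpace E] [MeasurableSpace F]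
    {μ : Measure E} {ν : Measure F} [IsFiniteMeasure ν] {s : Set (E × F)} (hs : MeasurableSet s) :
    (μ.prod ν).real s = ∫ x, ν.real (Prod.mk x ⁻¹' s) ∂μ := by
  rw [measureReal_def, Measure.prod_apply hs]
  exact (integral_toReal (measurable_measure_prodMk_left hs).aemeasurable
    (ae_of_all _ fun _ => measure_lt_top _ _)).symm

theorem measureReal_cmsLaw_Icc {α x : ℝ} (hα : α ∈ Ioo 0 2) (hα1 : α ≠ 1) (hx : 0 < x) :
    (cmsLaw α).real (Icc (-x) x) = 2 / π * sineIntegral (stableExp α) x := by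
  have heven (u : ℝ) : (expMeasure 1).real {w | cmsMap α (-u, w) ∈ Icc (-x) x} =
      (expMeasure 1).real {w | cmsMap α (u, w) ∈ Icc (-x) x} := by
    simp only [cmsMap_neg, mem_Icc, neg_le_neg_iff, neg_le (a := cmsMap α _), and_comm]
  rw [cmsLaw, map_measureReal_apply (measurable_cmsMap α) measurableSet_Icc,
    measureReal_prod_eq_integral (measurable_cmsMap α measurableSet_Icc), angleLaw,
    integral_smul_measure, ENNReal.toReal_ofReal (by positivity), smul_eq_mul]
  have hangle := setIntegral_Ioo_neg_of_even
    (f := fun u => (expMeasure 1).real {w | cmsMap α (u, w) ∈ Icc (-x) x}) heven (π / 2)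
  rw [integral_measureReal_cmsMap hα hα1 hx] at hangle
  refine (congrArg (1 / π * ·) hangle).trans ?_
  ring

theorem charFun_cmsLaw_of_ne {α : ℝ} (hα : α ∈ Ioo 0 2) (hα1 : α ≠ 1) (θ : ℝ) :
    charFun (cmsLaw α) θ = stableExp α θ :=
  charFun_eq_of_measureReal_Icc (map_neg_cmsLaw α) (continuous_stableExp hα.1.le)
    (integrable_stableExp hα.1) (stableExp_neg α) (fun _ => measureReal_cmsLaw_Icc hα hα1) θ

theorem continuousAt_cmsMap {α u w : ℝ} (hα : α ∈ Ioc 0 2) (hu : u ∈ Ioo (-(π / 2)) (π / 2))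
    (hw : 0 < w) : ContinuousAt (fun β => cmsMap β (u, w)) α := by
  have hcos := Real.cos_pos_of_mem_Ioo hu
  have hcos_sub := cos_sub_mul_pos (Ioc_subset_Icc_self hα) hu
  have hα0 := hα.1.ne'
  refine ContinuousAt.mul (ContinuousAt.div (by fun_prop) (ContinuousAt.rpow continuousAt_const
    (by fun_prop (disch := assumption)) (Or.inl hcos.ne')) (by positivity)) ?_
  exact ContinuousAt.rpow (by fun_prop) (by fun_prop (disch := assumption))
    (Or.inl (by positivity))

theorem continuousAt_charFun_cmsLaw {α : ℝ} (hα : α ∈ Ioc 0 2) (θ : ℝ) :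
    ContinuousAt (fun β => charFun (cmsLaw β) θ) α := by
  have hcharFun (β : ℝ) : charFun (cmsLaw β) θ =
      ∫ p, Complex.exp ((θ * cmsMap β p : ℝ) * Complex.I) ∂angleLaw.prod (expMeasure 1) := by
    rw [charFun_apply_real, cmsLaw, integral_map (by fun_prop) (by fun_prop)]
    push_cast
    rfl
  have hmem : ∀ᵐ p ∂angleLaw.prod (expMeasure 1), p.1 ∈ Ioo (-(π / 2)) (π / 2) ∧ 0 < p.2 :=
    (Measure.quasiMeasurePreserving_fst.ae
      (Measure.ae_smul_measure (ae_restrict_mem measurableSet_Ioo) _)).and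
      (Measure.quasiMeasurePreserving_snd.ae (ae_pos_expMeasure one_pos))
  simp_rw [hcharFun]
  refine continuousAt_of_dominated (bound := fun _ => 1) (Eventually.of_forall fun β => ?_)
    (Eventually.of_forall fun β => ae_of_all _ fun p => ?_) (integrable_const _) ?_
  · exact (by fun_prop : Measurable _).aestronglyMeasurable
  · rw [Complex.norm_exp_ofReal_mul_I]
  · filter_upwards [hmem] with p hp
    have := continuousAt_cmsMap hα hp.1 hp.2
    fun_prop

theorem charFun_cmsLaw {α : ℝ} (hα : α ∈ Ioc 0 2) (θ : ℝ) :
    charFun (cmsLaw α) θ = stableExp α θ := by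
  have hstable : ContinuousAt (fun β => (stableExp β θ : ℂ)) α := by
    have : ContinuousAt (fun β => |θ| ^ β) α :=
      continuousAt_const.rpow continuousAt_id (Or.inr hα.1)
    unfold stableExp
    fun_prop
  have hleft : ∀ᶠ β in 𝓝[<] α, β ∈ Ioo 0 2 ∧ β ≠ 1 := by
    rcases le_or_gt α 1 with hle | hgt
    · filter_upwards [Ioo_mem_nhdsLT hα.1] with β hβ
      exact ⟨⟨hβ.1, by linarith [hβ.2]⟩, (hβ.2.trans_le hle).ne⟩
    · filter_upwards [Ioo_mem_nhdsLT hgt] with β hβ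
      exact ⟨⟨one_pos.trans hβ.1, hβ.2.trans_le hα.2⟩, hβ.1.ne'⟩
  refine tendsto_nhds_unique (f := fun β => charFun (cmsLaw β) θ) (l := 𝓝[<] α)
    ((continuousAt_charFun_cmsLaw hα θ).tendsto.mono_left nhdsWithin_le_nhds)
    ((hstable.tendsto.mono_left nhdsWithin_le_nhds).congr' ?_)
  filter_upwards [hleft] with β hβ using (charFun_cmsLaw_of_ne hβ.1 hβ.2 θ).symm

theorem map_eq_cmsLaw {Ω : Type*} [MeasurableSpace Ω] {P : Measure Ω} [IsFiniteMeasure P]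
    {U W : Ω → ℝ} (hU : Measurable U) (hW : Measurable W) (hindep : IndepFun U W P)
    (hUlaw : P.map U = angleLaw) (hWlaw : P.map W = expMeasure 1) (α : ℝ) :
    P.map (fun ω => cmsMap α (U ω, W ω)) = cmsLaw α := by
  have hprod := (indepFun_iff_map_prod_eq_prod_map_map hU.aemeasurable hW.aemeasurable).1 hindep
  rw [hUlaw, hWlaw] at hprod
  rw [cmsLaw, ← hprod, Measure.map_map (measurable_cmsMap α) (hU.prodMk hW)]
  rfl

end ChambersMallowsStuckMap

end ChambersMallowsStuck

theorem cf_eq_charFun (ν : Measure ℝ) (θ : ℝ) : cf ν θ = charFun ν θ := by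
  rw [cf, charFun_apply_real]
  congr! 3 with x
  ring

theorem stmt_10_general {Ω : Type*} [MeasurableSpace Ω] (P : Measure Ω) [IsProbabilityMeasure P]
    (α : ℝ) (hα : 0 < α) (hα2 : α ≤ 2)
    (U W : Ω → ℝ) (hU : Measurable U) (hW : Measurable W)
    (hindep : IndepFun U W P)
    (hUlaw : P.map U =
      ENNReal.ofReal (1 / Real.pi) •
        volume.restrict (Set.Ioo (-(Real.pi / 2)) (Real.pi / 2)))
    (hWlaw : P.map W = expMeasure 1)
    (X : Ω → ℝ)
    (hX : ∀ ω, X ω =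
      Real.sin (α * U ω) / (Real.cos (U ω)) ^ ((1 : ℝ) / α) *
        (Real.cos (U ω - α * U ω) / W ω) ^ ((1 - α) / α)) :
    ∀ θ : ℝ, cf (P.map X) θ = Complex.exp (((-|θ| ^ α : ℝ) : ℂ)) := by
  intro θ
  have hlaw : P.map X = ChambersMallowsStuck.cmsLaw α := by
    rw [funext hX]
    exact ChambersMallowsStuck.map_eq_cmsLaw hU hW hindep hUlaw hWlaw α
  rw [cf_eq_charFun, hlaw, ChambersMallowsStuck.charFun_cmsLaw ⟨hα, hα2⟩,
    ChambersMallowsStuck.stableExp, Complex.ofReal_exp]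

theorem stmt_10 {Ω : Type*} [MeasurableSpace Ω] (P : Measure Ω) [IsProbabilityMeasure P]
    (α : ℝ) (hα : 0 < α) (hα2 : α ≤ 2) (hα1 : α ≠ 1)
    (U W : Ω → ℝ) (hU : Measurable U) (hW : Measurable W)
    (hindep : IndepFun U W P)
    (hUlaw : P.map U =
      ENNReal.ofReal (1 / Real.pi) •
        volume.restrict (Set.Ioo (-(Real.pi / 2)) (Real.pi / 2)))
    (hWlaw : P.map W = expMeasure 1)
    (X : Ω → ℝ)
    (hX : ∀ ω, X ω =
      Real.sin (α * U ω) / (Real.cos (U ω)) ^ ((1 : ℝ) / α) *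
        (Real.cos (U ω - α * U ω) / W ω) ^ ((1 - α) / α)) :
    ∀ θ : ℝ, cf (P.map X) θ = Complex.exp (((-|θ| ^ α : ℝ) : ℂ)) :=
  stmt_10_general P α hα hα2 U W hU hW hindep hUlaw hWlaw X hX
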